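/- For d = 2 and D the unit disk, and B the Berry Random Wave Model (stationary isotropic Gaussian field on R^2 with covariance J_0(|x-y|), i.e. isotropic spectral measure δ_1), one has Var(∫_{tD} B_x dx) = const · t^2 J_1(t)^2. In particular, the set {t ≥ T : Var(∫_{tD} B_x dx) = 0} is infinite for every T > 0. -/

import Mathlib

open MeasureTheory ProbabilityTheory Real
open scoped Pointwise

/-- The Bessel function of the first kind of order `ν`, via the Mehler–Sonine
representation (valid for `ν > -1/2`). -/
noncomputable def besselJ (ν t : ℝ) : ℝ :=
  (t / 2) ^ ν / (Real.sqrt π * Real.Gamma (ν + 1 / 2)) *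
    ∫ s in (-1 : ℝ)..1, Real.cos (t * s) * (1 - s ^ 2) ^ (ν - 1 / 2)


/-- Integral of cosine against a concave function over a full period is nonpositive. -/
lemma cos_concave_le (f : ℝ → ℝ) (hc : Continuous f) (hf : ConcaveOn ℝ (Set.Icc 0 (2 * π)) f) :
    ∫ u in (0 : ℝ)..(2 * π), cos u * f u ≤ 0 := by
  have hpi := Real.pi_pos
  have key : ∀ x y z : ℝ, 0 ≤ x → z ≤ 2 * π → x < y → y < z →
      (z - y) * f x + (y - x) * f z ≤ (z - x) * f y := by
    intro x y z hx hz hxy hyz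
    have := hf.neg.secant_mono_aux1 (x := x) (y := y) (z := z) ⟨hx, by linarith⟩
      ⟨by linarith, hz⟩ hxy hyz
    simp only [Pi.neg_apply] at this
    linarith
  set α := (3 * π / 2 * f (π / 2) - π / 2 * f (3 * π / 2)) / π with hα
  set β := (f (3 * π / 2) - f (π / 2)) / π with hβ
  have hL : ∀ u, π * (α + β * u) = (3 * π / 2 - u) * f (π / 2) + (u - π / 2) * f (3 * π / 2) := by
    intro u
    rw [hα, hβ]
    field_simp
    ring
  have hz : ∫ u in (0 : ℝ)..(2 * π), cos u * (α + β * u) = 0 := by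
    have : ∀ u ∈ Set.uIcc 0 (2 * π),
        HasDerivAt (fun u => α * sin u + β * (u * sin u + cos u)) (cos u * (α + β * u)) u := by
      intro u _
      have h1 := (Real.hasDerivAt_sin u).const_mul α
      have h2 := (((hasDerivAt_id u).mul (Real.hasDerivAt_sin u)).add
        (Real.hasDerivAt_cos u)).const_mul β
      refine (h1.add h2).congr_deriv ?_
      simp only [id]
      ring
    rw [intervalIntegral.integral_eq_sub_of_hasDerivAt this
      (Continuous.intervalIntegrable (by fun_prop) _ _)]
    simp
  refine le_of_le_of_eq ?_ hz
  have hi1 : Continuous fun u => cos u * f u := by fun_prop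
  have hi2 : Continuous fun u => cos u * (α + β * u) := by fun_prop
  refine intervalIntegral.integral_mono_on (by positivity)
    (hi1.intervalIntegrable (μ := volume) _ _) (hi2.intervalIntegrable (μ := volume) _ _) ?_
  rintro u ⟨hu0, hu1⟩
  have hLu := hL u
  rcases lt_trichotomy u (π / 2) with h | h | h
  · have hcos : 0 ≤ cos u := cos_nonneg_of_neg_pi_div_two_le_of_le (by linarith) h.le
    have := key u (π / 2) (3 * π / 2) hu0 (by linarith) h (by linarith)
    refine mul_le_mul_of_nonneg_left ?_ hcos
    refine le_of_mul_le_mul_left ?_ hpi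
    rw [hLu]; linarith
  · subst h; simp
  rcases lt_trichotomy u (3 * π / 2) with h' | h' | h'
  · have hcos : cos u ≤ 0 := cos_nonpos_of_pi_div_two_le_of_le h.le (by linarith)
    have := key (π / 2) u (3 * π / 2) (by linarith) (by linarith) h h'
    refine mul_le_mul_of_nonpos_left ?_ hcos
    refine le_of_mul_le_mul_left ?_ hpi
    rw [hLu]; linarith
  · have : cos u = 0 := by
      rw [h', show 3 * π / 2 = π / 2 + π by ring, Real.cos_add_pi]; simp
    simp [this]
  · have hcos : 0 ≤ cos u := by
      rw [← Real.cos_sub_two_pi]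
      exact cos_nonneg_of_neg_pi_div_two_le_of_le (by linarith) (by linarith)
    have := key (π / 2) (3 * π / 2) u (by linarith) (by linarith) (by linarith) h'
    refine mul_le_mul_of_nonneg_left ?_ hcos
    refine le_of_mul_le_mul_left ?_ hpi
    rw [hLu]; linarith

/-- The (unnormalized) Fourier transform of the semicircle. -/
noncomputable def semiI (t : ℝ) : ℝ := ∫ s in (-1 : ℝ)..1, cos (t * s) * √(1 - s ^ 2)

lemma semiI_continuous : Continuous semiI := by
  unfold semiI
  apply intervalIntegral.continuous_parametric_intervalIntegral_of_continuous'
  simp only [Function.uncurry_def]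
  fun_prop

lemma concave_semi : ConcaveOn ℝ (Set.Icc (-1) 1) (fun s : ℝ => √(1 - s ^ 2)) := by
  refine ⟨convex_Icc _ _, ?_⟩
  intro x hx y hy a b ha hb hab
  obtain ⟨hx1, hx2⟩ := hx
  obtain ⟨hy1, hy2⟩ := hy
  simp only [smul_eq_mul]
  have hx0 : 0 ≤ 1 - x ^ 2 := by nlinarith
  have hy0 : 0 ≤ 1 - y ^ 2 := by nlinarith
  have h1 := Real.strictConcaveOn_sqrt.concaveOn.2 (x := 1 - x ^ 2) hx0 (y := 1 - y ^ 2) hy0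
    ha hb hab
  simp only [smul_eq_mul] at h1
  refine h1.trans (Real.sqrt_le_sqrt ?_)
  have hb' : b = 1 - a := by linarith
  subst hb'
  nlinarith [mul_nonneg (mul_nonneg ha hb) (sq_nonneg (x - y))]

lemma semiI_sign (n : ℕ) (hn : 0 < n) : (-1 : ℝ) ^ n * semiI (n * π) ≤ 0 := by
  have hpi := Real.pi_pos
  have hn' : (0 : ℝ) < n := by exact_mod_cast hn
  have hnp : (0 : ℝ) < n * π := by positivity
  have h1 := intervalIntegral.integral_comp_div_sub (a := 0) (b := 2 * π * n) (c := n * π)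
    (fun s => cos (n * π * s) * √(1 - s ^ 2)) hnp.ne' 1
  rw [show 0 / ((n : ℝ) * π) - 1 = -1 by simp,
    show 2 * π * n / ((n : ℝ) * π) - 1 = 1 by field_simp; norm_num] at h1
  have h2 : ∀ u : ℝ, cos (n * π * (u / (n * π) - 1)) = (-1) ^ n * cos u := by
    intro u
    rw [show (n : ℝ) * π * (u / (n * π) - 1) = u - n * π by field_simp, Real.cos_sub_nat_mul_pi]
  simp only [h2] at h1
  have h3 : ∫ u in (0 : ℝ)..(2 * π * n), cos u * √(1 - (u / (n * π) - 1) ^ 2) ≤ 0 := by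
    have := intervalIntegral.sum_integral_adjacent_intervals (μ := volume)
      (f := fun u => cos u * √(1 - (u / (n * π) - 1) ^ 2)) (a := fun k : ℕ => 2 * π * k) (n := n)
      (fun k _ => Continuous.intervalIntegrable (by fun_prop) _ _)
    simp only [Nat.cast_zero, mul_zero] at this
    rw [← this]
    refine Finset.sum_nonpos ?_
    intro k hk
    have hk' : (k : ℝ) + 1 ≤ n := by exact_mod_cast Finset.mem_range.mp hk
    have h4 := intervalIntegral.integral_comp_add_right (a := 0) (b := 2 * π)
      (fun u => cos u * √(1 - (u / (n * π) - 1) ^ 2)) (2 * π * k)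
    rw [show 2 * π * ((k + 1 : ℕ) : ℝ) = 2 * π + 2 * π * k by push_cast; ring,
      show (2 * π * k : ℝ) = 0 + 2 * π * k by ring]
    simp only [zero_add] at h4 ⊢
    rw [← h4]
    have h5 : ∀ x : ℝ, cos (x + 2 * π * k) = cos x := by
      intro x
      rw [show x + 2 * π * k = x + k * (2 * π) by ring, Real.cos_add_nat_mul_two_pi]
    simp only [h5]
    refine cos_concave_le (fun x => √(1 - ((x + 2 * π * k) / (n * π) - 1) ^ 2)) (by fun_prop) ?_
    refine ⟨convex_Icc _ _, ?_⟩
    have hmem : ∀ x ∈ Set.Icc 0 (2 * π), (x + 2 * π * k) / (n * π) - 1 ∈ Set.Icc (-1 : ℝ) 1 := by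
      rintro x ⟨hx0, hx1⟩
      constructor
      · have : 0 ≤ (x + 2 * π * k) / (n * π) := by positivity
        linarith
      · have : (x + 2 * π * k) / (n * π) ≤ 2 := by
          rw [div_le_iff₀ hnp]
          nlinarith
        linarith
    intro x hx y hy a b ha hb hab
    have h6 := concave_semi.2 (hmem x hx) (hmem y hy) ha hb hab
    simp only [smul_eq_mul] at h6 ⊢
    convert h6 using 4
    have hb' : b = 1 - a := by linarith
    subst hb'
    field_simp
    ring
  have h7 : (-1 : ℝ) ^ n * ∫ u in (0 : ℝ)..(2 * π * n), cos u * √(1 - (u / (n * π) - 1) ^ 2)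
      = n * π * semiI (n * π) := by
    rw [← intervalIntegral.integral_const_mul]
    simp only [← mul_assoc]
    rw [h1]
    simp [semiI]
  have h8 : ((-1 : ℝ) ^ n) * (-1) ^ n = 1 := by rw [← mul_pow]; simp
  have h9 : n * π * ((-1 : ℝ) ^ n * semiI (n * π)) =
      ∫ u in (0 : ℝ)..(2 * π * n), cos u * √(1 - (u / (n * π) - 1) ^ 2) := by
    rw [mul_left_comm, ← h7, ← mul_assoc, h8, one_mul]
  by_contra hcon
  push Not at hcon
  have := mul_pos hnp hcon
  linarith

lemma semiI_zero (N : ℝ) : ∃ t, N < t ∧ semiI t = 0 := by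
  have hpi := Real.pi_pos
  obtain ⟨m, hm⟩ := exists_nat_gt (max N 0)
  have hm0 : (0 : ℝ) < m := (le_max_right _ _).trans_lt hm
  have hmN : N < m := (le_max_left _ _).trans_lt hm
  have hm0' : 0 < m := by exact_mod_cast hm0
  have h1 := semiI_sign (2 * m) (by omega)
  have h2 := semiI_sign (2 * m + 1) (by omega)
  rw [pow_mul] at h1
  rw [pow_succ, pow_mul] at h2
  norm_num at h1 h2
  obtain ⟨t, ht, ht0⟩ := intermediate_value_Icc (a := 2 * m * π) (b := (2 * m + 1) * π)
    (by nlinarith) semiI_continuous.continuousOn ⟨h1, h2⟩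
  refine ⟨t, ?_, ht0⟩
  have := ht.1
  nlinarith [Real.pi_gt_three]

lemma besselJ_one {t : ℝ} : besselJ 1 t = t / π * semiI t := by
  have hg : Real.Gamma (1 + 1 / 2) = √π / 2 := by
    rw [add_comm, Real.Gamma_add_one (by norm_num), Real.Gamma_one_half_eq]; ring
  have hs : √π * √π = π := Real.mul_self_sqrt Real.pi_pos.le
  unfold besselJ semiI
  rw [hg, Real.rpow_one]
  have : ∀ s : ℝ, (1 - s ^ 2) ^ ((1 : ℝ) - 1 / 2) = √(1 - s ^ 2) := by
    intro s; rw [Real.sqrt_eq_rpow]; norm_num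
  simp only [this]
  congr 1
  rw [← mul_div_assoc, hs]
  field_simp

lemma besselJ_zero (r : ℝ) :
    besselJ 0 r = 1 / (2 * π) * ∫ θ in (0 : ℝ)..(2 * π), cos (r * sin θ) := by
  have hpi := Real.pi_pos
  have hs : √π * √π = π := Real.mul_self_sqrt Real.pi_pos.le
  have himg : sin '' Set.Ioo (-(π / 2)) (π / 2) = Set.Ioo (-1) 1 := by
    ext y
    constructor
    · rintro ⟨x, hx, rfl⟩
      have := Real.strictMonoOn_sin
      constructor
      · have := this (a := -(π / 2)) ⟨le_rfl, by linarith⟩ ⟨hx.1.le, hx.2.le⟩ hx.1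
        simpa using this
      · have := this (b := (π / 2)) ⟨hx.1.le, hx.2.le⟩ ⟨by linarith, le_rfl⟩ hx.2
        simpa using this
    · rintro ⟨h1, h2⟩
      exact ⟨arcsin y, ⟨Real.neg_pi_div_two_lt_arcsin.2 h1, Real.arcsin_lt_pi_div_two.2 h2⟩,
        Real.sin_arcsin h1.le h2.le⟩
  have h1 : ∫ s in (-1 : ℝ)..1, cos (r * s) * (1 - s ^ 2) ^ ((0 : ℝ) - 1 / 2) =
      ∫ θ in (-(π / 2))..(π / 2), cos (r * sin θ) := by
    rw [intervalIntegral.integral_of_le (by norm_num),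
      intervalIntegral.integral_of_le (by linarith), integral_Ioc_eq_integral_Ioo,
      integral_Ioc_eq_integral_Ioo, ← himg,
      integral_image_eq_integral_abs_deriv_smul measurableSet_Ioo
        (fun x _ => (Real.hasDerivAt_sin x).hasDerivWithinAt)
        (Real.injOn_sin.mono Set.Ioo_subset_Icc_self)]
    refine setIntegral_congr_fun measurableSet_Ioo ?_
    intro x hx
    have hc : 0 < cos x := Real.cos_pos_of_mem_Ioo hx
    simp only [smul_eq_mul]
    rw [abs_of_pos hc, ← Real.cos_sq', ← Real.rpow_natCast, ← Real.rpow_mul hc.le]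
    norm_num
    rw [Real.rpow_neg_one]
    field_simp
  have hper : Function.Periodic (fun θ => cos (r * sin θ)) (2 * π) := by
    intro x; simp
  have h2 : ∫ θ in (0 : ℝ)..(2 * π), cos (r * sin θ) =
      2 * ∫ θ in (-(π / 2))..(π / 2), cos (r * sin θ) := by
    have := hper.intervalIntegral_add_eq 0 (-(π / 2))
    rw [zero_add] at this
    rw [this, ← intervalIntegral.integral_add_adjacent_intervals (b := π / 2)
      (Continuous.intervalIntegrable (by fun_prop) _ _)
      (Continuous.intervalIntegrable (by fun_prop) _ _), two_mul (intervalIntegral _ _ _ _)]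
    congr 1
    have h4 := intervalIntegral.integral_comp_add_right (a := -(π / 2)) (b := π / 2)
      (fun θ => cos (r * sin θ)) π
    rw [show -(π / 2) + π = π / 2 by ring, show π / 2 + π = -(π / 2) + 2 * π by ring] at h4
    rw [← h4]
    simp [Real.sin_add_pi]
  unfold besselJ
  rw [h1, h2, zero_add, Real.Gamma_one_half_eq, hs, Real.rpow_zero]
  field_simp

abbrev E2 := EuclideanSpace ℝ (Fin 2)

lemma besselJ_zero_norm (x : E2) :
    besselJ 0 ‖x‖ = 1 / (2 * π) * ∫ θ in (0 : ℝ)..(2 * π), cos (x 0 * cos θ + x 1 * sin θ) := by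
  rw [besselJ_zero]
  congr 1
  set z : ℂ := ⟨x 1, x 0⟩ with hz
  have hn : ‖x‖ = ‖z‖ := by
    rw [EuclideanSpace.norm_eq, Complex.norm_eq_sqrt_sq_add_sq, Fin.sum_univ_two]
    simp [hz, add_comm]
  have h1 : ‖z‖ * cos z.arg = x 1 := Complex.norm_mul_cos_arg z
  have h2 : ‖z‖ * sin z.arg = x 0 := Complex.norm_mul_sin_arg z
  have h3 : ∀ θ, x 0 * cos θ + x 1 * sin θ = ‖x‖ * sin (θ + z.arg) := by
    intro θ
    rw [Real.sin_add, hn, ← h1, ← h2]; ring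
  simp only [h3]
  have hper : Function.Periodic (fun θ => cos (‖x‖ * sin θ)) (2 * π) := by
    intro x; simp
  rw [intervalIntegral.integral_comp_add_right (fun θ => cos (‖x‖ * sin θ)), add_comm (2 * π),
    zero_add]
  have := hper.intervalIntegral_add_eq 0 z.arg
  rwa [zero_add] at this

lemma disk_rot (t θ : ℝ) (f : ℝ → ℝ) :
    ∫ x in Metric.closedBall (0 : E2) t, f (x 0 * cos θ + x 1 * sin θ) =
      ∫ z in Metric.closedBall (0 : ℂ) t, f z.re := by
  let g : ℂ ≃ₗᵢ[ℝ] E2 := (rotation (Circle.exp θ)).trans Complex.orthonormalBasisOneI.repr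
  have hg := g.measurePreserving.setIntegral_preimage_emb g.toHomeomorph.measurableEmbedding
    (fun x : E2 => f (x 0 * cos θ + x 1 * sin θ)) (Metric.closedBall 0 t)
  rw [← hg, LinearIsometryEquiv.preimage_closedBall]
  simp only [map_zero]
  congr 1
  ext z
  congr 1
  simp only [g, LinearIsometryEquiv.trans_apply, rotation_apply, Circle.coe_exp,
    Complex.orthonormalBasisOneI_repr_apply, Complex.exp_mul_I]
  simp [Complex.cos_ofReal_re, Complex.sin_ofReal_re]
  linear_combination z.re * Real.sin_sq_add_cos_sq θ

lemma disk_sin (t θ : ℝ) :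
    ∫ x in Metric.closedBall (0 : E2) t, sin (x 0 * cos θ + x 1 * sin θ) = 0 := by
  have hg := (LinearIsometryEquiv.neg ℝ (E := E2)).measurePreserving.setIntegral_preimage_emb
    (LinearIsometryEquiv.neg ℝ (E := E2)).toHomeomorph.measurableEmbedding
    (fun x : E2 => sin (x 0 * cos θ + x 1 * sin θ)) (Metric.closedBall 0 t)
  rw [LinearIsometryEquiv.preimage_closedBall] at hg
  simp only [map_zero, LinearIsometryEquiv.coe_neg, PiLp.neg_apply] at hg
  have : ∀ x : E2, sin (-x 0 * cos θ + -x 1 * sin θ) = - sin (x 0 * cos θ + x 1 * sin θ) := by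
    intro x; rw [← Real.sin_neg]; congr 1; ring
  simp only [this, integral_neg] at hg
  linarith

lemma disk_cos (t θ : ℝ) (ht : 0 < t) :
    ∫ x in Metric.closedBall (0 : E2) t, cos (x 0 * cos θ + x 1 * sin θ) =
      2 * t ^ 2 * semiI t := by
  rw [disk_rot]
  set S : Set (ℝ × ℝ) := {p | p.1 ^ 2 + p.2 ^ 2 ≤ t ^ 2} with hS
  have hSm : MeasurableSet S :=
    (isClosed_le (by fun_prop) (by fun_prop)).measurableSet
  have hpre : Complex.measurableEquivRealProd ⁻¹' S = Metric.closedBall (0 : ℂ) t := by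
    ext z
    simp only [Set.mem_preimage, hS, Set.mem_ofPred_eq, Complex.measurableEquivRealProd_apply,
      mem_closedBall_zero_iff, Complex.norm_eq_sqrt_sq_add_sq]
    rw [Real.sqrt_le_left ht.le]
  have h1 := Complex.volume_preserving_equiv_real_prod.setIntegral_preimage_emb
    Complex.measurableEquivRealProd.measurableEmbedding (fun p : ℝ × ℝ => cos p.1) S
  simp only [hpre, Complex.measurableEquivRealProd_apply] at h1
  rw [h1, ← integral_indicator hSm]
  have hSb : S ⊆ Set.Icc (-t) t ×ˢ Set.Icc (-t) t := by
    rintro ⟨a, b⟩ h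
    simp only [hS, Set.mem_ofPred_eq] at h
    exact ⟨abs_le.1 (abs_le_of_sq_le_sq (by nlinarith [sq_nonneg b]) ht.le),
      abs_le.1 (abs_le_of_sq_le_sq (by nlinarith [sq_nonneg a]) ht.le)⟩
  have hIntg : Integrable (S.indicator fun p : ℝ × ℝ => cos p.1) (volume.prod volume) := by
    rw [integrable_indicator_iff hSm]
    refine IntegrableOn.mono_set ?_ hSb
    exact (Continuous.continuousOn (by fun_prop)).integrableOn_compact
      (isCompact_Icc.prod isCompact_Icc)
  rw [Measure.volume_eq_prod, integral_prod _ hIntg]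
  have h2 : ∀ a : ℝ, ∫ b, S.indicator (fun p : ℝ × ℝ => cos p.1) (a, b) =
      (Set.Icc (-t) t).indicator (fun a => cos a * (2 * √(t ^ 2 - a ^ 2))) a := by
    intro a
    by_cases ha : a ∈ Set.Icc (-t) t
    · rw [Set.indicator_of_mem ha]
      have h0 : 0 ≤ t ^ 2 - a ^ 2 := by nlinarith [ha.1, ha.2]
      have : (fun b => S.indicator (fun p : ℝ × ℝ => cos p.1) (a, b)) =
          (Set.Icc (-√(t ^ 2 - a ^ 2)) (√(t ^ 2 - a ^ 2))).indicator (fun _ => cos a) := by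
        ext b
        have : (a, b) ∈ S ↔ b ∈ (Set.Icc (-√(t ^ 2 - a ^ 2)) (√(t ^ 2 - a ^ 2))) := by
          rw [Set.mem_Icc, ← abs_le, Real.le_sqrt (abs_nonneg b), sq_abs]
          · simp only [hS, Set.mem_ofPred_eq]
            constructor <;> intro h <;> linarith
          · exact h0
        simp only [Set.indicator, this]
      rw [this, integral_indicator measurableSet_Icc, setIntegral_const]
      simp [Measure.real]
      ring
    · rw [Set.indicator_of_notMem ha]
      have : ∀ b, (a, b) ∉ S := fun b hb => ha (hSb hb).1
      simp [Set.indicator, this]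
  simp only [h2]
  rw [integral_indicator measurableSet_Icc, integral_Icc_eq_integral_Ioc,
    ← intervalIntegral.integral_of_le (by linarith)]
  have h3 := intervalIntegral.integral_comp_mul_left (a := -1) (b := 1)
    (fun a => cos a * (2 * √(t ^ 2 - a ^ 2))) ht.ne'
  rw [mul_one, mul_neg_one, smul_eq_mul, eq_inv_mul_iff_mul_eq₀ ht.ne'] at h3
  rw [← h3]
  have h4 : ∀ s : ℝ, cos (t * s) * (2 * √(t ^ 2 - (t * s) ^ 2)) =
      2 * t * (cos (t * s) * √(1 - s ^ 2)) := by
    intro s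
    rw [show t ^ 2 - (t * s) ^ 2 = t ^ 2 * (1 - s ^ 2) by ring, Real.sqrt_mul (by positivity),
      Real.sqrt_sq ht.le]
    ring
  simp only [h4, intervalIntegral.integral_const_mul, semiI]
  ring

/-- The double integral of the covariance over the disk. -/
lemma double_integral (t : ℝ) (ht : 0 < t) (μ : Measure E2)
    (hμ : μ = (volume : Measure E2).restrict (Metric.closedBall 0 t)) :
    ∫ p : E2 × E2, besselJ 0 ‖p.1 - p.2‖ ∂(μ.prod μ) = (2 * t ^ 2 * semiI t) ^ 2 := by
  have hpi := Real.pi_pos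
  have hfin : IsFiniteMeasure μ := by
    rw [hμ]
    exact ⟨by simpa using (isCompact_closedBall (0 : E2) t).measure_lt_top (μ := volume)⟩
  simp only [besselJ_zero_norm]
  rw [integral_const_mul]
  have hc : Continuous (Function.uncurry fun (θ : ℝ) (p : E2 × E2) =>
      cos ((p.1 - p.2) 0 * cos θ + (p.1 - p.2) 1 * sin θ)) := by
    simp only [Function.uncurry_def]
    fun_prop
  rw [← intervalIntegral_integral_swap (f := fun (θ : ℝ) (p : E2 × E2) =>
      cos ((p.1 - p.2) 0 * cos θ + (p.1 - p.2) 1 * sin θ))]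
  · have h1 : ∀ θ : ℝ, ∫ p : E2 × E2, cos ((p.1 - p.2) 0 * cos θ + (p.1 - p.2) 1 * sin θ)
        ∂(μ.prod μ) = (2 * t ^ 2 * semiI t) ^ 2 := by
      intro θ
      have h2 : ∀ p : E2 × E2, cos ((p.1 - p.2) 0 * cos θ + (p.1 - p.2) 1 * sin θ) =
          cos (p.1 0 * cos θ + p.1 1 * sin θ) * cos (p.2 0 * cos θ + p.2 1 * sin θ) +
          sin (p.1 0 * cos θ + p.1 1 * sin θ) * sin (p.2 0 * cos θ + p.2 1 * sin θ) := by
        intro p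
        rw [← Real.cos_sub]
        congr 1
        simp only [PiLp.sub_apply]
        ring
      simp only [h2]
      rw [integral_add]
      · rw [integral_prod_mul (fun x : E2 => cos (x 0 * cos θ + x 1 * sin θ))
            (fun x : E2 => cos (x 0 * cos θ + x 1 * sin θ)),
          integral_prod_mul (fun x : E2 => sin (x 0 * cos θ + x 1 * sin θ))
            (fun x : E2 => sin (x 0 * cos θ + x 1 * sin θ)), hμ, disk_cos t θ ht, disk_sin]
        ring
      · refine Integrable.of_bound (Continuous.aestronglyMeasurable (by fun_prop)) 1
          (Filter.Eventually.of_forall fun p => ?_)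
        rw [norm_mul]
        exact mul_le_one₀ (Real.abs_cos_le_one _) (norm_nonneg _) (Real.abs_cos_le_one _)
      · refine Integrable.of_bound (Continuous.aestronglyMeasurable (by fun_prop)) 1
          (Filter.Eventually.of_forall fun p => ?_)
        rw [norm_mul]
        exact mul_le_one₀ (Real.abs_sin_le_one _) (norm_nonneg _) (Real.abs_sin_le_one _)
    simp only [h1]
    rw [intervalIntegral.integral_const, smul_eq_mul]
    field_simp
    ring
  · have : IsFiniteMeasure ((volume : Measure ℝ).restrict (Set.uIoc 0 (2 * π))) :=
      ⟨by simp [Set.uIoc]⟩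
    exact Integrable.of_bound hc.aestronglyMeasurable 1
      (Filter.Eventually.of_forall fun p => Real.abs_cos_le_one _)

lemma besselJ_zero_zero : besselJ 0 0 = 1 := by
  rw [besselJ_zero]
  have := Real.pi_pos
  simp
  field_simp

lemma variance_formula {Ω : Type*} [MeasureSpace Ω] [IsProbabilityMeasure (ℙ : Measure Ω)]
    (B : E2 → Ω → ℝ)
    (hjm : Measurable fun p : E2 × Ω => B p.1 p.2)
    (hcent : ∀ x, ∫ ω, B x ω ∂ℙ = 0)
    (hcov : ∀ x y, ∫ ω, B x ω * B y ω ∂ℙ = besselJ 0 ‖x - y‖)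
    (t : ℝ) (ht : 0 < t) :
    variance (fun ω => ∫ x in Metric.closedBall (0 : E2) t, B x ω) ℙ =
      (2 * t ^ 2 * semiI t) ^ 2 := by
  obtain ⟨μ, hμ⟩ : ∃ μ, μ = (volume : Measure E2).restrict (Metric.closedBall 0 t) := ⟨_, rfl⟩
  rw [← hμ]
  have hfin : IsFiniteMeasure μ := by
    rw [hμ]
    exact ⟨by simpa using (isCompact_closedBall (0 : E2) t).measure_lt_top (μ := volume)⟩
  have hm : ∀ x, Measurable (B x) := fun x => hjm.comp measurable_prodMk_left
  have hsq1 : ∀ x, ∫ ω, B x ω ^ 2 ∂ℙ = 1 := by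
    intro x
    have := hcov x x
    rw [sub_self, norm_zero, besselJ_zero_zero] at this
    simpa only [sq] using this
  have hsqi : ∀ x, Integrable (fun ω => B x ω ^ 2) ℙ := by
    intro x
    by_contra h
    have := hsq1 x
    rw [integral_undef h] at this
    norm_num at this
  have hL2 : ∀ x, MemLp (B x) 2 ℙ := fun x =>
    (memLp_two_iff_integrable_sq (hm x).aestronglyMeasurable).2 (hsqi x)
  have hprod : ∀ x y, Integrable (fun ω => B x ω * B y ω) ℙ := fun x y =>
    (hL2 x).integrable_mul (hL2 y)
  -- integrability on the product
  have hIntg1 : Integrable (fun p : E2 × Ω => B p.1 p.2) (μ.prod ℙ) := by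
    have h2 : Integrable (fun p : E2 × Ω => B p.1 p.2 ^ 2) (μ.prod ℙ) := by
      rw [integrable_prod_iff (hjm.pow_const 2).aestronglyMeasurable]
      refine ⟨Filter.Eventually.of_forall fun x => hsqi x, ?_⟩
      simp only [norm_pow, Real.norm_eq_abs, sq_abs, hsq1]
      exact integrable_const _
    exact ((memLp_two_iff_integrable_sq hjm.aestronglyMeasurable).2 h2).integrable
      (by norm_num)
  have hm3 : Measurable fun q : (E2 × E2) × Ω => B q.1.1 q.2 * B q.1.2 q.2 := by
    have h1 : Measurable fun q : (E2 × E2) × Ω => B q.1.1 q.2 :=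
      hjm.comp (f := fun q : (E2 × E2) × Ω => (q.1.1, q.2)) (by fun_prop)
    have h2 : Measurable fun q : (E2 × E2) × Ω => B q.1.2 q.2 :=
      hjm.comp (f := fun q : (E2 × E2) × Ω => (q.1.2, q.2)) (by fun_prop)
    exact h1.mul h2
  have hIntg3 : Integrable (fun q : (E2 × E2) × Ω => B q.1.1 q.2 * B q.1.2 q.2)
      ((μ.prod μ).prod ℙ) := by
    rw [integrable_prod_iff hm3.aestronglyMeasurable]
    refine ⟨Filter.Eventually.of_forall fun p => hprod p.1 p.2, ?_⟩
    refine Integrable.of_bound (C := 1) ?_ (Filter.Eventually.of_forall fun p => ?_)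
    · exact (StronglyMeasurable.integral_prod_right (ν := (ℙ : Measure Ω))
        (f := fun (p : E2 × E2) ω => ‖B p.1 ω * B p.2 ω‖)
        hm3.norm.stronglyMeasurable).aestronglyMeasurable
    · rw [Real.norm_eq_abs, abs_of_nonneg (integral_nonneg fun _ => norm_nonneg _)]
      have h1 : ∫ ω, ‖B p.1 ω * B p.2 ω‖ ∂ℙ ≤ ∫ ω, (B p.1 ω ^ 2 + B p.2 ω ^ 2) / 2 ∂ℙ := by
        refine integral_mono (hprod _ _).norm (((hsqi _).add (hsqi _)).div_const 2) ?_
        intro ω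
        simp only [Real.norm_eq_abs, abs_mul]
        nlinarith [sq_nonneg (|B p.1 ω| - |B p.2 ω|), sq_abs (B p.1 ω), sq_abs (B p.2 ω)]
      rw [integral_div, integral_add (hsqi _) (hsqi _), hsq1, hsq1] at h1
      linarith
  have hYm : AEMeasurable (fun ω => ∫ x, B x ω ∂μ) (ℙ : Measure Ω) :=
    (StronglyMeasurable.integral_prod_left (f := B)
      hjm.stronglyMeasurable).measurable.aemeasurable
  have hY0 : ∫ ω, ∫ x, B x ω ∂μ ∂ℙ = 0 := by
    rw [← integral_integral_swap (f := B) hIntg1]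
    simp [hcent]
  rw [variance_of_integral_eq_zero hYm hY0]
  have h4 : ∀ ω, (∫ x, B x ω ∂μ) ^ 2 = ∫ p : E2 × E2, B p.1 ω * B p.2 ω ∂(μ.prod μ) := by
    intro ω
    rw [integral_prod_mul (fun x => B x ω) (fun x => B x ω), sq]
  simp only [h4]
  rw [← integral_integral_swap (f := fun (p : E2 × E2) ω => B p.1 ω * B p.2 ω) hIntg3]
  simp only [hcov]
  exact double_integral t ht μ hμ

/-- For Berry's Random Wave Model on `ℝ²` (covariance `J₀(|x-y|)`) and `D` the unit disk,
`Var(∫_{tD} B_x dx) = const · t² J₁(t)²`; in particular the set of `t ≥ T` where this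
variance vanishes is infinite, for every `T > 0`. -/
theorem stmt_16
    {Ω : Type*} [MeasureSpace Ω] [IsProbabilityMeasure (ℙ : Measure Ω)]
    (B : EuclideanSpace ℝ (Fin 2) → Ω → ℝ)
    (hjm : Measurable fun p : EuclideanSpace ℝ (Fin 2) × Ω => B p.1 p.2)
    (hcont : ∀ᵐ ω ∂ℙ, Continuous fun x => B x ω)
    (hcent : ∀ x, ∫ ω, B x ω ∂ℙ = 0)
    (hcov : ∀ x y, ∫ ω, B x ω * B y ω ∂ℙ = besselJ 0 ‖x - y‖)
    (D : Set (EuclideanSpace ℝ (Fin 2)))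
    (hD : D = Metric.closedBall 0 1) :
    ∃ c : ℝ, 0 < c ∧
      (∀ t : ℝ, 0 < t →
        variance (fun ω => ∫ x in t • D, B x ω) ℙ = c * t ^ 2 * besselJ 1 t ^ 2) ∧
      ∀ T : ℝ, 0 < T →
        {t : ℝ | T ≤ t ∧ variance (fun ω => ∫ x in t • D, B x ω) ℙ = 0}.Infinite := by
  have hpi := Real.pi_pos
  have hvar : ∀ t : ℝ, 0 < t → variance (fun ω => ∫ x in t • D, B x ω) ℙ =
      (2 * t ^ 2 * semiI t) ^ 2 := by
    intro t ht
    rw [hD, smul_unitClosedBall_of_nonneg ht.le]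
    exact variance_formula B hjm hcent hcov t ht
  refine ⟨4 * π ^ 2, by positivity, ?_, ?_⟩
  · intro t ht
    rw [hvar t ht, besselJ_one]
    field_simp
    ring
  · intro T hT
    refine Set.infinite_of_forall_exists_gt fun N => ?_
    obtain ⟨t, ht, h0⟩ := semiI_zero (max N T)
    have hTt : T < t := (le_max_right _ _).trans_lt ht
    refine ⟨t, ⟨hTt.le, ?_⟩, (le_max_left _ _).trans_lt ht⟩
    rw [hvar t (hT.trans hTt), h0]
    ring
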